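/- Proposition 2 (goodput gain with zero-forcing interference cancellation at the receiver): with the notation below, the feedback goodput gain satisfies Δρ_ZF(D) = Σ_{k1D,k10} W(k1D,k10)·((P^D)_{k1D,k10} − π)·π ≤ c·(√λ)^D, where c = Σ_{k1D} √π · (max_{k10} W(k1D,k10)). -/

import Mathlib

/-!
In each row, `Σ W·(Q − π) ≤ (max W)·Σ |Q − π|` by Hölder's inequality (`ℓ^∞`–`ℓ¹`), and the
convergence bound gives `Σ |Q − π| ≤ √(N r)`. As `π = 1/N`, the remaining factor `π` turns `√(N r)`
into `√π·√r`; summing over the rows gives the constant `c`. For `Q = P ^ D` one takes `r = λ ^ D`.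
-/

section RowBound

variable {ι : Type*} {s : Finset ι} (hs : s.Nonempty)

theorem sum_mul_le_sup'_mul_sum_abs {R : Type*} [Ring R] [LinearOrder R] [IsOrderedRing R]
    {w : ι → R} (hw : ∀ i ∈ s, 0 ≤ w i) (x : ι → R) :
    ∑ i ∈ s, w i * x i ≤ s.sup' hs w * ∑ i ∈ s, |x i| := by
  rw [Finset.mul_sum]
  refine Finset.sum_le_sum fun i hi => ?_
  calc w i * x i
      ≤ w i * |x i| := mul_le_mul_of_nonneg_left (le_abs_self _) (hw i hi)
    _ ≤ s.sup' hs w * |x i| := mul_le_mul_of_nonneg_right (s.le_sup' w hi) (abs_nonneg _)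

theorem mul_le_sqrt_mul_sqrt_of_mul_sq_le {p a r : ℝ} (hp : 0 ≤ p) (h : p * a ^ 2 ≤ r) :
    p * a ≤ √p * √r := by
  rw [← Real.sqrt_mul hp]
  apply Real.le_sqrt_of_sq_le
  calc (p * a) ^ 2 = p * (p * a ^ 2) := by ring
    _ ≤ p * r := mul_le_mul_of_nonneg_left h hp

theorem sum_mul_mul_le_sqrt_mul_sup'_mul_sqrt {w x : ι → ℝ} (hw : ∀ i ∈ s, 0 ≤ w i)
    {p r : ℝ} (hp : 0 ≤ p) (hx : p * (∑ i ∈ s, |x i|) ^ 2 ≤ r) :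
    ∑ i ∈ s, w i * x i * p ≤ √p * s.sup' hs w * √r := by
  have sup_nonneg : 0 ≤ s.sup' hs w :=
    let ⟨i, hi⟩ := hs
    (hw i hi).trans (s.le_sup' w hi)
  calc ∑ i ∈ s, w i * x i * p
      = (∑ i ∈ s, w i * x i) * p := (Finset.sum_mul ..).symm
    _ ≤ (s.sup' hs w * ∑ i ∈ s, |x i|) * p :=
        mul_le_mul_of_nonneg_right (sum_mul_le_sup'_mul_sum_abs hs hw x) hp
    _ = s.sup' hs w * (p * ∑ i ∈ s, |x i|) := by ring
    _ ≤ s.sup' hs w * (√p * √r) :=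
        mul_le_mul_of_nonneg_left (mul_le_sqrt_mul_sqrt_of_mul_sq_le hp hx) sup_nonneg
    _ = √p * s.sup' hs w * √r := by ring

end RowBound

theorem sqrt_pow_of_nonneg {a : ℝ} (ha : 0 ≤ a) (n : ℕ) : √(a ^ n) = √a ^ n := by
  rw [← Real.sqrt_sq (pow_nonneg (Real.sqrt_nonneg a) n), pow_right_comm, Real.sq_sqrt ha]

theorem zero_forcing_goodput_gain_bound_general {ι κ : Type*} [Fintype ι] [Fintype κ] [Nonempty κ]
    (Q : Matrix ι κ ℝ) (r : ℝ)
    (hQ : ∀ l, (∑ m, |Q l m - 1 / (Fintype.card κ : ℝ)|) ^ 2 ≤ (Fintype.card κ : ℝ) * r)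
    (W : ι × κ → ℝ) (hW : ∀ x, 0 ≤ W x) :
    (∑ l, ∑ m, W (l, m) * (Q l m - 1 / (Fintype.card κ : ℝ)) * (1 / (Fintype.card κ : ℝ)))
      ≤ (∑ l, √(1 / (Fintype.card κ : ℝ))
          * Finset.univ.sup' Finset.univ_nonempty fun m => W (l, m)) * √r := by
  have card_pos : (0 : ℝ) < Fintype.card κ := Nat.cast_pos.mpr Fintype.card_pos
  rw [Finset.sum_mul]
  refine Finset.sum_le_sum fun l _ => ?_
  have deviation_le :
      1 / (Fintype.card κ : ℝ) * (∑ m, |Q l m - 1 / (Fintype.card κ : ℝ)|) ^ 2 ≤ r := by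
    rw [one_div_mul_eq_div, div_le_iff₀' card_pos]
    exact hQ l
  exact sum_mul_mul_le_sqrt_mul_sup'_mul_sqrt Finset.univ_nonempty (fun m _ => hW (l, m))
    (one_div_pos.mpr card_pos).le deviation_le

/-- Proposition 2: with zero-forcing interference cancellation at the receiver,
the feedback goodput gain
`Δρ_ZF(D) = Σ_{k1D,k10} W(k1D,k10)·((P^D)_{k1D,k10} − π)·π` satisfies
`Δρ_ZF(D) ≤ c·(√λ)^D`, where `c = Σ_{k1D} √π · (max_{k10} W(k1D,k10))`,
`π = 1/N`, `P` is row stochastic, and the Markov convergence bound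
`(Σ_m |(P^D)_{lm} − 1/N|)² ≤ N·λ^D` holds. -/
theorem zero_forcing_goodput_gain_bound (N : ℕ) [NeZero N]
    (P : Matrix (Fin N) (Fin N) ℝ)
    (hP0 : ∀ l m, 0 ≤ P l m) (hP1 : ∀ l, ∑ m, P l m = 1)
    (lam : ℝ) (hlam0 : 0 ≤ lam) (hlam1 : lam ≤ 1) (D : ℕ)
    (hconv : ∀ l, (∑ m, |(P ^ D) l m - 1 / (N : ℝ)|) ^ 2 ≤ (N : ℝ) * lam ^ D)
    (W : Fin N × Fin N → ℝ) (hW : ∀ x, 0 ≤ W x) :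
    (∑ k1D : Fin N, ∑ k10 : Fin N,
        W (k1D, k10) * ((P ^ D) k1D k10 - 1 / (N : ℝ)) * (1 / (N : ℝ)))
      ≤ (∑ k1D : Fin N, Real.sqrt (1 / (N : ℝ))
          * Finset.univ.sup' Finset.univ_nonempty fun k10 : Fin N =>
              W (k1D, k10))
        * Real.sqrt lam ^ D := by
  simpa only [Fintype.card_fin, sqrt_pow_of_nonneg hlam0] using
    zero_forcing_goodput_gain_bound_general (P ^ D) (lam ^ D)
      (by simpa only [Fintype.card_fin] using hconv) W hW
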